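/- (Multi-dimensional version.) For every k, d, r ∈ ℕ with k, d, r ≥ 1 and every colouring c : FIN_{±k}^[d] → {0, …, r−1} there exist i < r and an infinite block sequence P ∈ FIN_{±k}^[∞] such that ⟨P⟩_{±k}^[d] ⊆ (c⁻¹{i})₁. -/

import Mathlib

open Function Set

/-- `p` is an element of `FIN_{±k}`: finitely supported, values in `{0, ±1, …, ±k}`,
attaining one of the values `±k`. -/
def IsFin (k : ℕ) (p : ℕ → ℤ) : Prop :=
  (Function.support p).Finite ∧ (∀ n, |p n| ≤ (k : ℤ)) ∧ (∃ n, |p n| = (k : ℤ))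

/-- `p < q` in the block ordering: every point of `supp p` precedes every point of `supp q`. -/
def BlockLt (p q : ℕ → ℤ) : Prop :=
  ∀ m n : ℕ, p m ≠ 0 → q n ≠ 0 → m < n

/-- The tetris operation `T`. -/
def tetris (p : ℕ → ℤ) : ℕ → ℤ := fun n =>
  if 0 < p n then p n - 1 else if p n < 0 then p n + 1 else 0

/-- The sign-flipped tetris operation `-T`. -/
def negT (p : ℕ → ℤ) : ℕ → ℤ := -(tetris p)

/-- The weak tetris operation `S`. -/
def Sop (p : ℕ → ℤ) : ℕ → ℤ := fun n => if |p n| = 1 then 0 else p n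

/-- `‖p‖ ≤ c` for the `ℓ∞` norm. -/
def normLe (p : ℕ → ℤ) (c : ℕ) : Prop := ∀ n, |p n| ≤ (c : ℤ)

/-- `(A)_c`, the `c`-fattening of `A`. -/
def approx (c : ℕ) (A : Set (ℕ → ℤ)) : Set (ℕ → ℤ) :=
  {p | ∃ q ∈ A, normLe (p - q) c}

/-- `P` is an infinite block sequence in `FIN_{±k}`. -/
def IsBlockSeq (k : ℕ) (P : ℕ → ℕ → ℤ) : Prop :=
  (∀ n, IsFin k (P n)) ∧ ∀ m n : ℕ, m < n → BlockLt (P m) (P n)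

/-- `t` is a finite block sequence in `FIN_{±k}` (coded as a list). -/
def IsFinBlockSeq (k : ℕ) (t : List (ℕ → ℤ)) : Prop :=
  (∀ p ∈ t, IsFin k p) ∧ t.Pairwise BlockLt

/-- `q ∈ ⟨P⟩_{±k}`: `q = ε₀T^{j₀}(p_{n₀}) + ⋯ + ε_m T^{j_m}(p_{n_m})` with `n₀ < ⋯ < n_m`,
`εᵢ ∈ {±1}`, `jᵢ < k` and `min jᵢ = 0`. -/
def InSpanPM (k : ℕ) (P : ℕ → ℕ → ℤ) (q : ℕ → ℤ) : Prop :=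
  ∃ (m : ℕ) (n : Fin (m + 1) → ℕ) (ε : Fin (m + 1) → ℤ) (j : Fin (m + 1) → ℕ),
    StrictMono n ∧ (∀ i, ε i = 1 ∨ ε i = -1) ∧ (∀ i, j i < k) ∧ (∃ i, j i = 0) ∧
    q = ∑ i, ε i • tetris^[j i] (P (n i))

/-- `q ∈ ⟨P⟩_{(−T)}`. -/
def InSpanNegT (k : ℕ) (P : ℕ → ℕ → ℤ) (q : ℕ → ℤ) : Prop :=
  ∃ (m : ℕ) (n : Fin (m + 1) → ℕ) (j : Fin (m + 1) → ℕ),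
    StrictMono n ∧ (∀ i, j i < k) ∧ (∃ i, j i = 0) ∧
    q = ∑ i, negT^[j i] (P (n i))

/-- `q ∈ ⟨p_a, …, p_b⟩_{(−T)}`. -/
def InSpanNegTRange (k : ℕ) (P : ℕ → ℕ → ℤ) (a b : ℕ) (q : ℕ → ℤ) : Prop :=
  ∃ (m : ℕ) (n : Fin (m + 1) → ℕ) (j : Fin (m + 1) → ℕ),
    StrictMono n ∧ (∀ i, a ≤ n i ∧ n i ≤ b) ∧ (∀ i, j i < k) ∧ (∃ i, j i = 0) ∧
    q = ∑ i, negT^[j i] (P (n i))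

/-- A cofinite ultrafilter on `FIN_{±k}` (coded as an ultrafilter on `ℕ → ℤ`
concentrating on `FIN_{±k}`). -/
def IsCofiniteUF (k : ℕ) (𝒰 : Ultrafilter (ℕ → ℤ)) : Prop :=
  {p | IsFin k p} ∈ 𝒰 ∧ ∀ m : ℕ, {p : ℕ → ℤ | ∀ n < m, p n = 0} ∈ 𝒰

/-- `A ∈ 𝒰 + 𝒱`. -/
def SumMem (𝒰 𝒱 : Ultrafilter (ℕ → ℤ)) (A : Set (ℕ → ℤ)) : Prop :=
  {p | {q | BlockLt p q ∧ p + q ∈ A} ∈ 𝒱} ∈ 𝒰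

/-- `𝒰` is subsymmetric: `A ∈ 𝒰` implies `−(A)₁ ∈ 𝒰`. -/
def IsSubsymmetric (𝒰 : Ultrafilter (ℕ → ℤ)) : Prop :=
  ∀ A ∈ 𝒰, {p : ℕ → ℤ | -p ∈ approx 1 A} ∈ 𝒰

/-- `𝒰 + (−T)^j 𝒰 = (−T)^j 𝒰 + 𝒰 = 𝒰` for all `j ≤ k`. -/
def IsIdempotentUF (k : ℕ) (𝒰 : Ultrafilter (ℕ → ℤ)) : Prop :=
  ∀ j ≤ k, ∀ A : Set (ℕ → ℤ),
    (SumMem 𝒰 (Ultrafilter.map (negT^[j]) 𝒰) A ↔ A ∈ 𝒰) ∧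
    (SumMem (Ultrafilter.map (negT^[j]) 𝒰) 𝒰 A ↔ A ∈ 𝒰)

/-- A cofinite subsymmetric ultrafilter on `FIN_{±k}` idempotent with respect to
all the maps `(−T)^j`, `j ≤ k`. -/
def IsGowersUF (k : ℕ) (𝒰 : Ultrafilter (ℕ → ℤ)) : Prop :=
  IsCofiniteUF k 𝒰 ∧ IsSubsymmetric 𝒰 ∧ IsIdempotentUF k 𝒰

/-- A `𝒰`-tree on `FIN_{±k}` with stem `s`. -/
structure IsUTree (k : ℕ) (𝒰 : Ultrafilter (ℕ → ℤ)) (U : Set (List (ℕ → ℤ)))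
    (s : List (ℕ → ℤ)) : Prop where
  blocks : ∀ t ∈ U, IsFinBlockSeq k t
  prefixClosed : ∀ t ∈ U, ∀ t' : List (ℕ → ℤ), t' <+: t → t' ∈ U
  stemMem : s ∈ U
  stemComparable : ∀ t ∈ U, s <+: t ∨ t <+: s
  branch : ∀ t ∈ U, s <+: t → {p | t ++ [p] ∈ U} ∈ 𝒰

/-- `[U]`, the set of infinite branches of a tree of finite block sequences. -/
def Branches (U : Set (List (ℕ → ℤ))) : Set (ℕ → ℕ → ℤ) :=
  {P | ∀ n : ℕ, (List.ofFn fun i : Fin n => P i.1) ∈ U}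

/-- The space `FIN_{±k}^[∞]` of infinite block sequences. -/
def BlockSeq (k : ℕ) : Type := {P : ℕ → ℕ → ℤ // IsBlockSeq k P}

/-- The metrizable topology on `FIN_{±k}^[∞]`, generated by the basic sets `[s]`. -/
instance BlockSeq.topology (k : ℕ) : TopologicalSpace (BlockSeq k) :=
  TopologicalSpace.generateFrom
    {O | ∃ s : List (ℕ → ℤ),
      O = {P : BlockSeq k | ∀ i : Fin s.length, P.1 i.1 = s.get i}}

/-- The Souslin operation applied to a Souslin scheme. -/
def SouslinOp {α : Type*} (F : List ℕ → Set α) : Set α :=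
  ⋃ x : ℕ → ℕ, ⋂ n : ℕ, F (List.ofFn fun i : Fin n => x i.1)

/-- `A` is Souslin measurable: it belongs to every field of sets containing the open
sets and closed under the Souslin operation. -/
def SouslinMeasurable {α : Type*} [TopologicalSpace α] (A : Set α) : Prop :=
  ∀ 𝓕 : Set (Set α),
    (∀ O : Set α, IsOpen O → O ∈ 𝓕) →
    (∀ B ∈ 𝓕, Bᶜ ∈ 𝓕) →
    (∀ B ∈ 𝓕, ∀ C ∈ 𝓕, B ∪ C ∈ 𝓕) →
    (∀ F : List ℕ → Set α, (∀ s, F s ∈ 𝓕) → SouslinOp F ∈ 𝓕) →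
    A ∈ 𝓕

/-- The map `Φ_m : FIN_{±2m} → FIN_{±m}` (its defining formula does not depend on `m`). -/
def Phi (p : ℕ → ℤ) : ℕ → ℤ := fun n =>
  if p n % 2 = 0 then p n / 2
  else if 0 < p n then (p n - 1) / 2
  else (p n + 1) / 2

/-- `Ψ = Φ_k ∘ Φ_{2k} : FIN_{±4k} → FIN_{±k}`. -/
def Psi (p : ℕ → ℤ) : ℕ → ℤ := Phi (Phi p)

/-- `Q` is a block sequence in `FIN_{±k}` of length `d`. -/
def IsBlockSeqFin (k d : ℕ) (Q : Fin d → ℕ → ℤ) : Prop :=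
  (∀ n, IsFin k (Q n)) ∧ ∀ m n : Fin d, m < n → BlockLt (Q m) (Q n)

/-! Iterating a compactness argument on the semigroup of ultrafilters gives a cofinite `𝒰` with
`(-T)ⁱ𝒰 + (-T)ʲ𝒰 = (-T)^(min i j)𝒰`. Since `p - T(p)` is within `1` of `0`, comparing
`𝒰 - T𝒰` with `-T𝒰 + 𝒰` shows that `𝒰` is subsymmetric. Hence a generic `x` comes
with a generic `y` within `1` of `-x`, and every `ε Tʲ(x)` is within `1` of `(-T)ʲ(x)` or
`(-T)ʲ(y)`. On the other hand, the tuples of the colour that `d` successive `𝒰`-generic vectors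
receive contain a `𝒰`-tree. It therefore suffices to keep the `(-T)`-combinations of the pairs
`{x, y}` in this tree, for which idempotence is enough: the requirements on the next pair depend on
the exponents already used in the current sum only through their minimum. -/

open Filter

attribute [local instance] Ultrafilter.add Ultrafilter.addSemigroup

section Tetris

variable {p q : ℕ → ℤ} {j k : ℕ}

lemma abs_tetris_apply (p : ℕ → ℤ) (n : ℕ) : |tetris p n| = max (|p n| - 1) 0 := by
  simp only [tetris]
  split_ifs <;> grind

lemma abs_tetris_iterate_apply (j : ℕ) (p : ℕ → ℤ) (n : ℕ) :
    |tetris^[j] p n| = max (|p n| - j) 0 := by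
  induction j with
  | zero => simp
  | succ j ih =>
    rw [iterate_succ_apply', abs_tetris_apply, ih]
    push_cast
    omega

lemma tetris_iterate_apply_ne_zero {n : ℕ} (h : (j : ℤ) < |p n|) : tetris^[j] p n ≠ 0 := by
  rw [← abs_pos, abs_tetris_iterate_apply]
  omega

lemma support_tetris_iterate_subset (j : ℕ) (p : ℕ → ℤ) :
    support (tetris^[j] p) ⊆ support p := by
  intro n hn hpn
  rw [mem_support, ← abs_pos, abs_tetris_iterate_apply, hpn, abs_zero] at hn
  omega

lemma tetris_neg (p : ℕ → ℤ) : tetris (-p) = -tetris p := by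
  funext n
  simp only [tetris, Pi.neg_apply]
  split_ifs <;> omega

lemma negT_neg (p : ℕ → ℤ) : negT (-p) = -negT p := by
  simp [negT, tetris_neg]

lemma negT_iterate_neg (j : ℕ) (p : ℕ → ℤ) : negT^[j] (-p) = -negT^[j] p :=
  ((show Function.Commute negT Neg.neg from negT_neg).iterate_left j) p

lemma tetris_iterate_eq_or (j : ℕ) (p : ℕ → ℤ) :
    tetris^[j] p = negT^[j] p ∨ tetris^[j] p = -negT^[j] p := by
  induction j with
  | zero => exact Or.inl rfl
  | succ j ih =>
    simp only [iterate_succ_apply']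
    rcases ih with h | h <;> simp [h, negT, tetris_neg]

lemma abs_negT_iterate_apply (j : ℕ) (p : ℕ → ℤ) (n : ℕ) :
    |negT^[j] p n| = max (|p n| - j) 0 := by
  rw [← abs_tetris_iterate_apply]
  rcases tetris_iterate_eq_or j p with h | h <;> simp [h]

lemma support_negT_iterate_subset (j : ℕ) (p : ℕ → ℤ) : support (negT^[j] p) ⊆ support p := by
  intro n hn hpn
  rw [mem_support, ← abs_pos, abs_negT_iterate_apply, hpn, abs_zero] at hn
  omega

lemma IsFin.negT_iterate_eq_zero (hp : IsFin k p) : negT^[k] p = 0 := by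
  funext n
  have := hp.2.1 n
  rw [Pi.zero_apply, ← abs_eq_zero, abs_negT_iterate_apply]
  omega

lemma normLe_negT_sub_negT {c : ℕ} (h : normLe (p - q) c) : normLe (negT p - negT q) c := by
  intro n
  have := h n
  simp only [Pi.sub_apply, negT, tetris, Pi.neg_apply] at this ⊢
  rw [abs_le] at this ⊢
  split_ifs <;> omega

lemma normLe_negT_iterate_sub {c : ℕ} (h : normLe (p - q) c) (j : ℕ) :
    normLe (negT^[j] p - negT^[j] q) c := by
  induction j with
  | zero => exact h
  | succ j ih => simpa only [iterate_succ_apply'] using normLe_negT_sub_negT ih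

lemma normLe_add_negT (p : ℕ → ℤ) : normLe (p + negT p) 1 := by
  intro n
  simp only [Pi.add_apply, negT, tetris, Pi.neg_apply]
  rw [abs_le]
  push_cast
  split_ifs <;> omega

lemma exists_normLe_smul_tetris_sub_negT {x y : ℕ → ℤ} (hxy : normLe (x + y) 1) {ε : ℤ}
    (hε : ε = 1 ∨ ε = -1) (j : ℕ) :
    ∃ z ∈ ({x, y} : Set (ℕ → ℤ)), normLe (ε • tetris^[j] x - negT^[j] z) 1 := by
  have hsign : ε • tetris^[j] x = negT^[j] x ∨ ε • tetris^[j] x = negT^[j] (-x) := by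
    rw [negT_iterate_neg]
    rcases hε with rfl | rfl <;> rcases tetris_iterate_eq_or j x with h | h <;> simp [h]
  rcases hsign with h | h
  · exact ⟨x, Or.inl rfl, fun n => by simp [h]⟩
  · refine ⟨y, Or.inr rfl, h ▸ normLe_negT_iterate_sub (fun n => ?_) j⟩
    rw [← abs_neg]
    simpa [add_comm] using hxy n

lemma normLe_sum_of_pairwise_disjoint {ι : Type*} [Fintype ι] {g : ι → ℕ → ℤ} {c : ℕ}
    (hg : ∀ i, normLe (g i) c)
    (hd : Pairwise (Disjoint on fun i => support (g i))) : normLe (∑ i, g i) c := by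
  intro n
  rw [Finset.sum_apply]
  by_cases h : ∃ i, g i n ≠ 0
  · obtain ⟨i, hi⟩ := h
    rw [Finset.sum_eq_single_of_mem i (Finset.mem_univ i) fun j _ hji =>
      notMem_support.1 (disjoint_right.1 (hd hji) hi)]
    exact hg i n
  · push Not at h
    simp [h]

end Tetris

section BlockLt

variable {p q : ℕ → ℤ} {k l m : ℕ}

lemma BlockLt.disjoint_support (h : BlockLt p q) : Disjoint (support p) (support q) :=
  disjoint_left.2 fun n hp hq => (h n n hp hq).false

lemma BlockLt.eq_zero_or_eq_zero (h : BlockLt p q) (n : ℕ) : p n = 0 ∨ q n = 0 := by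
  by_contra! hn
  exact (h n n hn.1 hn.2).false

lemma BlockLt.abs_add_apply (h : BlockLt p q) (n : ℕ) : |(p + q) n| = max |p n| |q n| := by
  rcases h.eq_zero_or_eq_zero n with h0 | h0 <;> simp [h0]

lemma BlockLt.negT_add (h : BlockLt p q) : negT (p + q) = negT p + negT q := by
  funext n
  rcases h.eq_zero_or_eq_zero n with h0 | h0 <;> simp [negT, tetris, h0]

lemma BlockLt.normLe_add {c : ℕ} (h : BlockLt p q) (hp : normLe p c) (hq : normLe q c) :
    normLe (p + q) c := fun n => by
  rw [h.abs_add_apply]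
  exact max_le (hp n) (hq n)

lemma BlockLt.mono {p' q' : ℕ → ℤ} (h : BlockLt p q) (hp : support p' ⊆ support p)
    (hq : support q' ⊆ support q) : BlockLt p' q' :=
  fun m n hm hn => h m n (hp hm) (hq hn)

lemma IsFin.add (hp : IsFin l p) (hq : IsFin m q) (h : BlockLt p q) :
    IsFin (max l m) (p + q) := by
  refine ⟨(hp.1.union hq.1).subset (support_add p q), fun n => ?_, ?_⟩
  · rw [h.abs_add_apply]
    exact_mod_cast max_le_max (hp.2.1 n) (hq.2.1 n)
  · simp only [h.abs_add_apply]
    rcases le_total l m with hlm | hlm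
    · obtain ⟨n, hn⟩ := hq.2.2
      exact ⟨n, by have := hp.2.1 n; omega⟩
    · obtain ⟨n, hn⟩ := hp.2.2
      exact ⟨n, by have := hq.2.1 n; omega⟩

lemma isFinBlockSeq_ofFn {d : ℕ} {Q : Fin d → ℕ → ℤ} :
    IsFinBlockSeq k (List.ofFn Q) ↔ IsBlockSeqFin k d Q :=
  and_congr List.forall_mem_ofFn_iff List.pairwise_ofFn

lemma isFinBlockSeq_concat {t : List (ℕ → ℤ)} :
    IsFinBlockSeq k (t ++ [p]) ↔ IsFinBlockSeq k t ∧ IsFin k p ∧ ∀ q ∈ t, BlockLt q p := by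
  simp only [IsFinBlockSeq, List.pairwise_append, List.mem_append, List.mem_singleton]
  grind

end BlockLt

section TetrisIdempotent

variable {k l m : ℕ} {U V W : Ultrafilter (ℕ → ℤ)}

/-- Idempotence of `U` with respect to `-T`, in terms of the sum of ultrafilters in Mathlib, which
does not ask for the summands to be blocks. It extends `IsIdempotentUF` to all pairs of
exponents. -/
def IsTetrisIdempotent (U : Ultrafilter (ℕ → ℤ)) : Prop :=
  ∀ i j : ℕ, U.map negT^[i] + U.map negT^[j] = U.map negT^[min i j]

lemma IsTetrisIdempotent.eventually_iff (hU : IsTetrisIdempotent U) (i j : ℕ)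
    (P : (ℕ → ℤ) → Prop) :
    (∀ᶠ x in U, ∀ᶠ y in U, P (negT^[i] x + negT^[j] y)) ↔ ∀ᶠ x in U, P (negT^[min i j] x) := by
  have h : (∀ᶠ x in ↑(U.map negT^[i] + U.map negT^[j]), P x) ↔
      ∀ᶠ x in ↑(U.map negT^[min i j]), P x := by rw [hU i j]
  simpa only [Ultrafilter.eventually_add, Ultrafilter.coe_map, eventually_map] using h

lemma IsCofiniteUF.eventually_isFin (hU : IsCofiniteUF k U) : ∀ᶠ p in U, IsFin k p := hU.1

lemma IsCofiniteUF.eventually_blockLt (hU : IsCofiniteUF k U) {p : ℕ → ℤ}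
    (hp : (support p).Finite) : ∀ᶠ q in U, BlockLt p q := by
  obtain ⟨b, hb⟩ := hp.bddAbove
  filter_upwards [hU.2 (b + 1)] with q hq m n hm hn
  by_contra! hnm
  exact hn (hq n (by have := hb hm; omega))

lemma IsCofiniteUF.add (hU : IsCofiniteUF l U) (hV : IsCofiniteUF m V) :
    IsCofiniteUF (max l m) (U + V) := by
  constructor
  · change ∀ᶠ p in U, ∀ᶠ q in V, IsFin (max l m) (p + q)
    filter_upwards [hU.eventually_isFin] with p hp
    filter_upwards [hV.eventually_isFin, hV.eventually_blockLt hp.1] with q hq hpq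
    exact hp.add hq hpq
  · intro b
    change ∀ᶠ p in U, ∀ᶠ q in V, ∀ n < b, (p + q : ℕ → ℤ) n = 0
    filter_upwards [hU.2 b] with p hp
    filter_upwards [hV.2 b] with q hq n hn
    simp [hp n hn, hq n hn]

lemma IsCofiniteUF.map_negT_add (hU : IsCofiniteUF l U) (hV : IsCofiniteUF m V) :
    (U + V).map negT = U.map negT + V.map negT := by
  refine Ultrafilter.ext fun A => ?_
  change (∀ᶠ p in U, ∀ᶠ q in V, negT (p + q) ∈ A) ↔ ∀ᶠ p in U, ∀ᶠ q in V, negT p + negT q ∈ A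
  refine eventually_congr ?_
  filter_upwards [hU.eventually_isFin] with p hp
  refine eventually_congr ?_
  filter_upwards [hV.eventually_blockLt hp.1] with q hq
  rw [hq.negT_add]

lemma IsCofiniteUF.eq_pure_zero (hU : IsCofiniteUF 0 U) : U = pure 0 := by
  have hzero : {0} ∈ U := by
    filter_upwards [hU.eventually_isFin] with p hp
    funext n
    simpa using hp.2.1 n
  obtain ⟨p, rfl, hp⟩ := Ultrafilter.eq_pure_of_finite_mem (finite_singleton 0) hzero
  exact hp

lemma isCofiniteUF_pure_zero : IsCofiniteUF 0 (pure 0) :=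
  ⟨⟨by simp, by simp, 0, by simp⟩, fun _ _ _ => rfl⟩

lemma isTetrisIdempotent_pure_zero : IsTetrisIdempotent (pure 0) := by
  intro i j
  have hfix (n : ℕ) : negT^[n] (0 : ℕ → ℤ) = 0 :=
    iterate_fixed (by funext n; simp [negT, tetris]) n
  simp only [Ultrafilter.map_pure, hfix]
  refine Ultrafilter.ext fun A => ?_
  exact Iff.of_eq (congrArg (· ∈ A) (add_zero (0 : ℕ → ℤ)))

/-- The section of `negT` moving every nonzero value one step away from `0`. -/
def negTLift (q : ℕ → ℤ) : ℕ → ℤ := fun n => -(q n + (q n).sign)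

lemma negT_negTLift (q : ℕ → ℤ) : negT (negTLift q) = q := by
  funext n
  rcases lt_trichotomy (q n) 0 with h | h | h <;>
    simp only [negT, tetris, negTLift, Pi.neg_apply, h, Int.sign_eq_one_of_pos,
      Int.sign_eq_neg_one_of_neg, Int.sign_zero] <;> split_ifs <;> omega

lemma IsFin.negTLift (hl : l ≠ 0) {q : ℕ → ℤ} (hq : IsFin l q) : IsFin (l + 1) (negTLift q) := by
  have habs (n : ℕ) : |_root_.negTLift q n| = if q n = 0 then 0 else |q n| + 1 := by
    rcases lt_trichotomy (q n) 0 with h | h | h <;>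
      simp [_root_.negTLift, Int.sign_eq_one_of_pos, Int.sign_eq_neg_one_of_neg, h] <;> grind
  refine ⟨hq.1.subset fun n hn hqn => hn (by simp [_root_.negTLift, hqn]), fun n => ?_, ?_⟩
  · have := hq.2.1 n
    rw [habs]
    split_ifs <;> grind
  · obtain ⟨n, hn⟩ := hq.2.2
    exact ⟨n, by rw [habs]; grind⟩

lemma isFin_single (n : ℕ) : IsFin 1 (Pi.single n 1) := by
  refine ⟨(finite_singleton n).subset Pi.support_single_subset, fun m => ?_, n, by simp⟩
  by_cases h : m = n <;> simp [h]

lemma negT_single (n : ℕ) : negT (Pi.single n 1) = 0 := by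
  funext m
  by_cases h : m = n <;> simp [negT, tetris, h]

lemma IsCofiniteUF.exists_lift_of_ne_zero (hl : l ≠ 0) (hU : IsCofiniteUF l U) :
    ∃ W, IsCofiniteUF (l + 1) W ∧ W.map negT = U := by
  refine ⟨U.map negTLift, ⟨?_, fun m => ?_⟩, ?_⟩
  · change ∀ᶠ q in U, IsFin (l + 1) (negTLift q)
    filter_upwards [hU.eventually_isFin] with q hq using hq.negTLift hl
  · change ∀ᶠ q in U, ∀ n < m, negTLift q n = 0
    filter_upwards [hU.2 m] with q hq n hn
    simp [negTLift, hq n hn]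
  · rw [Ultrafilter.map_map, show negT ∘ negTLift = id from funext negT_negTLift,
      Ultrafilter.map_id]

lemma exists_isCofiniteUF_one_map_negT : ∃ W, IsCofiniteUF 1 W ∧ W.map negT = pure 0 := by
  refine ⟨(hyperfilter ℕ).map fun n => Pi.single n 1, ⟨?_, fun m => ?_⟩, ?_⟩
  · exact Eventually.of_forall (f := (hyperfilter ℕ : Filter ℕ)) isFin_single
  · change ∀ᶠ n in (hyperfilter ℕ : Filter ℕ), ∀ i < m, (Pi.single n 1 : ℕ → ℤ) i = 0
    filter_upwards [Nat.hyperfilter_le_atTop (eventually_ge_atTop m)] with n (hn : m ≤ n) i hi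
    exact Pi.single_eq_of_ne (by omega) 1
  · rw [Ultrafilter.map_map, ← Ultrafilter.coe_inj, Ultrafilter.coe_map,
      show negT ∘ (fun n => Pi.single n 1) = fun _ => 0 from funext negT_single,
      Filter.map_const]
    rfl

lemma IsCofiniteUF.exists_lift (hU : IsCofiniteUF l U) :
    ∃ W, IsCofiniteUF (l + 1) W ∧ W.map negT = U := by
  rcases eq_or_ne l 0 with rfl | hl
  · exact hU.eq_pure_zero ▸ exists_isCofiniteUF_one_map_negT
  · exact hU.exists_lift_of_ne_zero hl

lemma continuous_ultrafilter_map {α β : Type*} (f : α → β) :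
    Continuous (Ultrafilter.map f) := by
  refine ultrafilterBasis_is_basis.continuous_iff.2 ?_
  rintro _ ⟨s, rfl⟩
  exact ultrafilter_isOpen_basic (f ⁻¹' s)

lemma isClosed_setOf_isCofiniteUF (l : ℕ) : IsClosed {W | IsCofiniteUF l W} := by
  simp only [IsCofiniteUF, ofPred_and, ofPred_forall]
  exact (ultrafilter_isClosed_basic _).inter
    (isClosed_iInter fun _ => ultrafilter_isClosed_basic _)

/-- The closed semigroup of lifts of `U` is stable under `X ↦ X + U`, so the Ellis–Numakura
lemma gives an idempotent of the form `X + U`; adding `U` on the left makes it absorb `U` on both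
sides. -/
lemma IsCofiniteUF.exists_lift_add_self (hU : IsCofiniteUF l U) (hUI : IsTetrisIdempotent U) :
    ∃ W, IsCofiniteUF (l + 1) W ∧ W.map negT = U ∧ W + W = W ∧ U + W = W ∧ W + U = W := by
  have hadd : U + U = U := by simpa [Ultrafilter.map_id] using hUI 0 0
  have hadd_map : U + U.map negT = U := by simpa [Ultrafilter.map_id] using hUI 0 1
  have hmap_add : U.map negT + U = U := by simpa [Ultrafilter.map_id] using hUI 1 0
  set S : Set (Ultrafilter (ℕ → ℤ)) := {X | IsCofiniteUF (l + 1) X ∧ X.map negT = U}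
  have hSclosed : IsClosed S :=
    (isClosed_setOf_isCofiniteUF _).inter
      (isClosed_singleton.preimage (continuous_ultrafilter_map _))
  have hS_add_U : ∀ X ∈ S, X + U ∈ S := fun X ⟨hX, hXU⟩ =>
    ⟨by simpa using hX.add hU, by rw [hX.map_negT_add hU, hXU, hadd_map]⟩
  have hS_add : ∀ X ∈ S, ∀ Y ∈ S, X + Y ∈ S := fun X ⟨hX, hXU⟩ Y ⟨hY, hYU⟩ =>
    ⟨by simpa using hX.add hY, by rw [hX.map_negT_add hY, hXU, hYU, hadd]⟩
  obtain ⟨_, ⟨X, hX, rfl⟩, hidem : X + U + (X + U) = X + U⟩ :=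
    exists_idempotent_in_compact_add_subsemigroup Ultrafilter.continuous_add_left ((· + U) '' S)
      (Nonempty.image _ hU.exists_lift)
      (hSclosed.isCompact.image (Ultrafilter.continuous_add_left U))
      (by
        rintro _ ⟨X, hX, rfl⟩ _ ⟨Y, hY, rfl⟩
        exact ⟨X + U + Y, hS_add _ (hS_add_U X hX) Y hY, add_assoc _ _ _⟩)
  obtain ⟨hXU, hXU_map⟩ := hS_add_U X hX
  have habsorb : X + U + U = X + U := by rw [add_assoc, hadd]
  refine ⟨U + (X + U), by simpa using hU.add hXU, ?_, ?_, ?_, ?_⟩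
  · rw [hU.map_negT_add hXU, hXU_map, hmap_add]
  · calc U + (X + U) + (U + (X + U)) = U + (X + U + U + (X + U)) := by simp only [add_assoc]
      _ = U + (X + U) := by rw [habsorb, hidem]
  · rw [← add_assoc, hadd]
  · rw [add_assoc, habsorb]

lemma IsTetrisIdempotent.of_map_negT (hU : IsTetrisIdempotent U) (hWU : W.map negT = U)
    (hW : W + W = W) (hleft : U + W = W) (hright : W + U = W) : IsTetrisIdempotent W := by
  have hsucc (i : ℕ) : W.map negT^[i + 1] = U.map negT^[i] := by
    rw [iterate_succ, ← Ultrafilter.map_map, hWU]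
  have hzero (V : Ultrafilter (ℕ → ℤ)) : V.map negT^[0] = V := V.map_id
  intro i j
  rcases i with _ | i <;> rcases j with _ | j
  · rw [Nat.min_self, hzero, hW]
  · have hU0 : U + U.map negT^[j] = U := by simpa [hzero] using hU 0 j
    calc W.map negT^[0] + W.map negT^[j + 1] = W + U + U.map negT^[j] := by
          rw [hzero, hsucc, hright]
      _ = W.map negT^[min 0 (j + 1)] := by rw [add_assoc, hU0, hright, Nat.zero_min, hzero]
  · have hU0 : U.map negT^[i] + U = U := by simpa [hzero] using hU i 0
    calc W.map negT^[i + 1] + W.map negT^[0] = U.map negT^[i] + (U + W) := by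
          rw [hzero, hsucc, hleft]
      _ = W.map negT^[min (i + 1) 0] := by rw [← add_assoc, hU0, hleft, Nat.min_zero, hzero]
  · rw [hsucc, hsucc, hU, Nat.succ_min_succ, hsucc]

theorem exists_isCofiniteUF_isTetrisIdempotent (k : ℕ) :
    ∃ U, IsCofiniteUF k U ∧ IsTetrisIdempotent U := by
  induction k with
  | zero => exact ⟨pure 0, isCofiniteUF_pure_zero, isTetrisIdempotent_pure_zero⟩
  | succ k ih =>
    obtain ⟨U, hU, hUI⟩ := ih
    obtain ⟨W, hW, hWU, hWW, hUW, hWU'⟩ := hU.exists_lift_add_self hUI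
    exact ⟨W, hW, hUI.of_map_negT hWU hWW hUW hWU'⟩

lemma IsCofiniteUF.isSubsymmetric (hU : IsCofiniteUF k U) (hUI : IsTetrisIdempotent U) :
    IsSubsymmetric U := by
  intro A hA
  have hnegT_add : ∀ᶠ x in U, ∀ᶠ y in U, negT x + y ∈ A := (hUI.eventually_iff 1 0 (· ∈ A)).2 hA
  refine (hUI.eventually_iff 0 1 fun x => -x ∈ approx 1 A).1 ?_
  filter_upwards [hnegT_add, hU.eventually_isFin] with x hxA hx
  filter_upwards [hxA, hU.eventually_blockLt hx.1] with y hyA hxy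
  refine ⟨_, hyA, fun n => ?_⟩
  have hsum : normLe ((x + negT x) + (y + negT y)) 1 := by
    refine (hxy.mono ?_ ?_).normLe_add (normLe_add_negT x) (normLe_add_negT y) <;>
    exact (support_add _ _).trans (union_subset subset_rfl (support_negT_iterate_subset 1 _))
  rw [← abs_neg]
  convert hsum n using 2
  simp
  ring

lemma IsSubsymmetric.frequently_normLe_add (hU : IsSubsymmetric U) :
    ∃ᶠ a in (U ×ˢ U : Filter ((ℕ → ℤ) × (ℕ → ℤ))), normLe (a.1 + a.2) 1 := by
  refine frequently_iff.2 fun {s} hs => ?_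
  obtain ⟨A, hA, hAs⟩ := mem_prod_same_iff.1 hs
  have hneg : ∀ᶠ x in U, -x ∈ approx 1 A := hU A hA
  obtain ⟨x, ⟨y, hyA, hxy⟩, hxA⟩ := (hneg.and hA).exists
  refine ⟨(x, y), hAs ⟨hxA, hyA⟩, fun n => ?_⟩
  rw [← abs_neg]
  simpa [sub_eq_add_neg, add_comm] using hxy n

end TetrisIdempotent

section ColourTree

/-- The iterated quantifier `∀ᶠ x₁ in L, …, ∀ᶠ xₙ in L, C (t ++ [x₁, …, xₙ])`. -/
def IterEventually {α : Type*} (L : Filter α) (C : List α → Prop) : ℕ → List α → Prop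
  | 0, t => C t
  | n + 1, t => ∀ᶠ x in L, IterEventually L C n (t ++ [x])

lemma exists_iterEventually_eq {α κ : Type*} [Finite κ] (U : Ultrafilter α) (col : List α → κ)
    (n : ℕ) (t : List α) : ∃ i, IterEventually U (col · = i) n t := by
  induction n generalizing t with
  | zero => exact ⟨col t, rfl⟩
  | succ n ih =>
    exact Ultrafilter.eventually_exists_iff.1 (Eventually.of_forall fun x => ih (t ++ [x]))

lemma eventually_iterEventually_concat {α : Type*} {L : Filter α} {C : List α → Prop} {d : ℕ}
    {t : List α} (h : ∀ n, t.length + n = d → IterEventually L C n t) :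
    ∀ᶠ x in L, ∀ n, (t ++ [x]).length + n = d → IterEventually L C n (t ++ [x]) := by
  simp only [List.length_append, List.length_singleton]
  rcases lt_or_ge t.length d with hd | hd
  · obtain ⟨n, hn⟩ := Nat.exists_eq_add_of_lt hd
    have hiter : ∀ᶠ x in L, IterEventually L C n (t ++ [x]) := h (n + 1) (by omega)
    filter_upwards [hiter] with x hx n' hn'
    obtain rfl : n' = n := by omega
    exact hx
  · exact Eventually.of_forall fun x n hn => by omega

variable {k d : ℕ} {U : Ultrafilter (ℕ → ℤ)}

lemma IsFinBlockSeq.sublist {t t' : List (ℕ → ℤ)} (ht : IsFinBlockSeq k t) (h : t'.Sublist t) :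
    IsFinBlockSeq k t' :=
  ⟨fun p hp => ht.1 p (h.subset hp), ht.2.sublist h⟩

lemma IsCofiniteUF.eventually_isFinBlockSeq_concat (hU : IsCofiniteUF k U) {t : List (ℕ → ℤ)}
    (ht : IsFinBlockSeq k t) : ∀ᶠ p in U, IsFinBlockSeq k (t ++ [p]) := by
  have hlt : ∀ᶠ p in U, ∀ q ∈ t, BlockLt q p :=
    (eventually_all_finite t.finite_toSet).2 fun q hq => hU.eventually_blockLt (ht.1 q hq).1
  filter_upwards [hU.eventually_isFin, hlt] with p hp hlt
  exact isFinBlockSeq_concat.2 ⟨ht, hp, hlt⟩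

theorem IsCofiniteUF.exists_isUTree_colour_eq {κ : Type*} [Finite κ] (hU : IsCofiniteUF k U)
    (c : (Fin d → ℕ → ℤ) → κ) :
    ∃ i 𝒯, IsUTree k U 𝒯 [] ∧ ∀ Q : Fin d → ℕ → ℤ, List.ofFn Q ∈ 𝒯 → c Q = i := by
  let col (t : List (ℕ → ℤ)) : κ := c fun a => t.getD a 0
  obtain ⟨i, hi⟩ := exists_iterEventually_eq U col d []
  refine ⟨i, {t | IsFinBlockSeq k t ∧ ∀ t' n, t' <+: t → t'.length + n = d →
    IterEventually U (col · = i) n t'}, ⟨fun t ht => ht.1, ?_, ?_, ?_, ?_⟩, ?_⟩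
  · exact fun t ht t' h => ⟨ht.1.sublist h.sublist, fun t'' n h' => ht.2 t'' n (h'.trans h)⟩
  · refine ⟨⟨by simp, List.Pairwise.nil⟩, fun t' n h hn => ?_⟩
    obtain rfl := List.prefix_nil.1 h
    obtain rfl : n = d := by simpa using hn
    exact hi
  · exact fun t _ => Or.inl ⟨t, rfl⟩
  · intro t ht _
    filter_upwards [hU.eventually_isFinBlockSeq_concat ht.1,
      eventually_iterEventually_concat fun n => ht.2 t n List.prefix_rfl] with p hp hlast
    refine ⟨hp, fun t' n h hn => ?_⟩
    rcases List.prefix_concat_iff.1 h with rfl | h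
    exacts [hlast n hn, ht.2 t' n h hn]
  · intro Q hQ
    have hcol : col (List.ofFn Q) = i := hQ.2 _ 0 List.prefix_rfl (by simp)
    simpa [col] using hcol

end ColourTree

section PartialTuple

/-- A state in the construction of a tuple of `-T`-combinations from a sequence of vectors: the
completed entries, the current partial sum and the minimal exponent used in it. An empty sum in
`FIN_{±k}` has exponent `k`, as if it consisted of a vector killed by `(-T)ᵏ`. -/
structure PartialTuple where
  minExp : ℕ
  done : List (ℕ → ℤ)
  cur : ℕ → ℤ

/-- Adding `(-T)ʲz` to the current partial sum. -/
def PartialTuple.add (j : ℕ) (z : ℕ → ℤ) (s : PartialTuple) : PartialTuple :=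
  ⟨min s.minExp j, s.done, s.cur + negT^[j] z⟩

/-- Moving the current partial sum to the completed entries, when this is allowed: one of the
exponents has to be `0`. -/
def PartialTuple.close (k : ℕ) (s : PartialTuple) : PartialTuple :=
  if s.minExp = 0 then ⟨k, s.done ++ [s.cur], 0⟩ else s

/-- The states that can follow `s` when the vectors in `A` become available: at most one of them
is added, after which the current sum may be closed. -/
def PartialTuple.next (k : ℕ) (A : Set (ℕ → ℤ)) (s : PartialTuple) : Set PartialTuple :=
  insert s (⋃ j ∈ Iic k, ⋃ z ∈ A, {s.add j z, (s.add j z).close k})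

/-- The state `s` can be completed within the tree `𝒯` by `(-T)ⁱx` for `U`-almost every `x`, for
each exponent `i` that would allow the current sum to be closed. -/
def PartialTuple.Good (k : ℕ) (U : Ultrafilter (ℕ → ℤ)) (𝒯 : Set (List (ℕ → ℤ)))
    (s : PartialTuple) : Prop :=
  ∀ i ≤ k, min s.minExp i = 0 → ∀ᶠ x in U, s.done ++ [s.cur + negT^[i] x] ∈ 𝒯

namespace PartialTuple

variable {k : ℕ} {U : Ultrafilter (ℕ → ℤ)} {𝒯 : Set (List (ℕ → ℤ))} {s : PartialTuple}

lemma finite_next (k : ℕ) {A : Set (ℕ → ℤ)} (hA : A.Finite) (s : PartialTuple) :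
    (s.next k A).Finite :=
  ((finite_Iic k).biUnion fun _ _ => hA.biUnion fun _ _ => toFinite _).insert s

lemma add_mem_next {A : Set (ℕ → ℤ)} {j : ℕ} (hj : j ≤ k) {z : ℕ → ℤ} (hz : z ∈ A) :
    s.add j z ∈ s.next k A :=
  Or.inr (mem_biUnion hj (mem_biUnion hz (Or.inl rfl)))

lemma close_add_mem_next {A : Set (ℕ → ℤ)} {j : ℕ} (hj : j ≤ k) {z : ℕ → ℤ} (hz : z ∈ A) :
    (s.add j z).close k ∈ s.next k A :=
  Or.inr (mem_biUnion hj (mem_biUnion hz (Or.inr rfl)))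

lemma close_of_minExp_eq_zero (h : s.minExp = 0) : s.close k = ⟨k, s.done ++ [s.cur], 0⟩ :=
  if_pos h

lemma good_of_mem (hT : IsUTree k U 𝒯 []) {t : List (ℕ → ℤ)} (ht : t ∈ 𝒯) :
    Good k U 𝒯 ⟨k, t, 0⟩ := by
  intro i hi hmin
  obtain rfl : i = 0 := by rwa [min_eq_right hi] at hmin
  filter_upwards [hT.branch t ht ⟨t, rfl⟩] with x hx
  simpa using hx

lemma Good.mem (hT : IsUTree k U 𝒯 []) {m : ℕ} {t : List (ℕ → ℤ)} {p : ℕ → ℤ}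
    (h : Good k U 𝒯 ⟨m, t, p⟩) : t ∈ 𝒯 := by
  obtain ⟨x, hx⟩ := (h 0 k.zero_le (Nat.min_zero m)).exists
  exact hT.prefixClosed _ hx _ (List.prefix_append _ _)

lemma Good.eventually_add (hUI : IsTetrisIdempotent U) (h : s.Good k U 𝒯) (j : ℕ) :
    ∀ᶠ z in U, (s.add j z).Good k U 𝒯 := by
  refine (eventually_all_finite (finite_Iic k)).2 fun i (hi : i ≤ k) => ?_
  simp only [add, add_assoc]
  refine eventually_imp_distrib_left.2 fun hmin => ?_
  exact (hUI.eventually_iff j i fun w => s.done ++ [s.cur + w] ∈ 𝒯).2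
    (h _ ((min_le_right j i).trans hi) (by rw [← min_assoc]; exact hmin))

lemma Good.close (hU : IsCofiniteUF k U) (hT : IsUTree k U 𝒯 []) (h : s.Good k U 𝒯) :
    (s.close k).Good k U 𝒯 := by
  by_cases hs : s.minExp = 0
  · rw [close_of_minExp_eq_zero hs]
    obtain ⟨x, hx, hxk⟩ := ((h k le_rfl (by simp [hs])).and hU.eventually_isFin).exists
    rw [hxk.negT_iterate_eq_zero, add_zero] at hx
    exact good_of_mem hT hx
  · rwa [PartialTuple.close, if_neg hs]

lemma Good.eventually_next (hU : IsCofiniteUF k U) (hUI : IsTetrisIdempotent U)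
    (hT : IsUTree k U 𝒯 []) (h : s.Good k U 𝒯) :
    ∀ᶠ a in (U ×ˢ U : Filter ((ℕ → ℤ) × (ℕ → ℤ))), ∀ s' ∈ s.next k {a.1, a.2}, s'.Good k U 𝒯 := by
  have hadd : ∀ᶠ z in U, ∀ j ∈ Iic k, (s.add j z).Good k U 𝒯 :=
    (eventually_all_finite (finite_Iic k)).2 fun j _ => h.eventually_add hUI j
  filter_upwards [hadd.prod_mk hadd] with a ha
  have hpair : ∀ z ∈ ({a.1, a.2} : Set (ℕ → ℤ)), ∀ j ∈ Iic k, (s.add j z).Good k U 𝒯 := by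
    rintro z (rfl | rfl)
    exacts [ha.1, ha.2]
  simp only [next, mem_insert_iff, mem_iUnion]
  rintro s' (rfl | ⟨j, hj, z, hz, rfl | rfl⟩)
  exacts [h, hpair z hz j hj, (hpair z hz j hj).close hU hT]

end PartialTuple

end PartialTuple

section Fusion

theorem exists_seq_of_eventually_next {α σ : Type*} {L : Filter α} {p : α → Prop}
    {good : σ → Prop} {next : α → σ → Set σ} {s₀ : σ} (hp : ∃ᶠ a in L, p a)
    (hfin : ∀ a s, (next a s).Finite) (h₀ : good s₀)
    (hnext : ∀ s, good s → ∀ᶠ a in L, ∀ s' ∈ next a s, good s') :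
    ∃ (a : ℕ → α) (S : ℕ → Set σ), (∀ n, p (a n)) ∧ s₀ ∈ S 0 ∧
      (∀ n, ∀ s ∈ S n, next (a n) s ⊆ S (n + 1)) ∧ ∀ n, ∀ s ∈ S n, good s := by
  let Stage := {S : Set σ // S.Finite ∧ ∀ s ∈ S, good s}
  have hex (S : Stage) : ∃ a, p a ∧ ∀ s ∈ S.1, ∀ s' ∈ next a s, good s' :=
    (hp.and_eventually ((eventually_all_finite S.2.1).2 fun s hs => hnext s (S.2.2 s hs))).exists
  choose a ha hgood using hex
  let step (S : Stage) : Stage :=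
    ⟨⋃ s ∈ S.1, next (a S) s, S.2.1.biUnion fun s _ => hfin _ s, fun s' hs' => by
      obtain ⟨s, hs, hs'⟩ := mem_iUnion₂.1 hs'
      exact hgood S s hs s' hs'⟩
  let S (n : ℕ) : Stage := step^[n] ⟨{s₀}, finite_singleton s₀, by simpa using h₀⟩
  refine ⟨fun n => a (S n), fun n => (S n).1, fun n => ha (S n), rfl, fun n s hs => ?_,
    fun n => (S n).2.2⟩
  simp only [S, iterate_succ_apply']
  exact subset_biUnion_of_mem (u := fun s => next (a (S n)) s) hs

/-- A run of the fusion construction in the tree `𝒯`: the vectors in `A n` become available at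
stage `n`, the states in `S n` have been reached before that, and completed tuples stay in the
tree. -/
structure IsFusion (k : ℕ) (𝒯 : Set (List (ℕ → ℤ))) (A : ℕ → Set (ℕ → ℤ))
    (S : ℕ → Set PartialTuple) : Prop where
  start : ⟨k, [], 0⟩ ∈ S 0
  next_subset : ∀ n, ∀ s ∈ S n, s.next k (A n) ⊆ S (n + 1)
  mem_tree : ∀ n t, ⟨k, t, 0⟩ ∈ S n → t ∈ 𝒯

/-- The vector `q` is a `-T`-combination in `FIN_{±k}` of vectors chosen from the sets `A n` with
`M ≤ n < N`, at most one from each. -/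
def InNegSpan (k : ℕ) (A : ℕ → Set (ℕ → ℤ)) (M N : ℕ) (q : ℕ → ℤ) : Prop :=
  ∃ (m : ℕ) (n j : Fin m → ℕ) (z : Fin m → ℕ → ℤ), StrictMono n ∧ (∀ i, n i ∈ Ico M N) ∧
    (∀ i, z i ∈ A (n i)) ∧ (∀ i, j i < k) ∧ (∃ i, j i = 0) ∧ q = ∑ i, negT^[j i] (z i)

variable {k : ℕ} {U : Ultrafilter (ℕ → ℤ)} {𝒯 : Set (List (ℕ → ℤ))} {A : ℕ → Set (ℕ → ℤ)}
  {S : ℕ → Set PartialTuple}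

theorem IsUTree.exists_isFusion (hT : IsUTree k U 𝒯 []) (hU : IsCofiniteUF k U)
    (hUI : IsTetrisIdempotent U) :
    ∃ (x y : ℕ → ℕ → ℤ) (S : ℕ → Set PartialTuple), (∀ n, normLe (x n + y n) 1) ∧
      IsFusion k 𝒯 (fun n => {x n, y n}) S := by
  obtain ⟨a, S, hnear, hstart, hnext, hgood⟩ := exists_seq_of_eventually_next
    (hU.isSubsymmetric hUI).frequently_normLe_add
    (fun a s => PartialTuple.finite_next k (toFinite {a.1, a.2}) s)
    (PartialTuple.good_of_mem hT hT.stemMem) fun _ hs => hs.eventually_next hU hUI hT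
  exact ⟨fun n => (a n).1, fun n => (a n).2, S, hnear, hstart, hnext,
    fun n _ ht => (hgood n _ ht).mem hT⟩

namespace IsFusion

lemma monotone (hf : IsFusion k 𝒯 A S) : Monotone S :=
  monotone_nat_of_le_succ fun n s hs => hf.next_subset n s hs (mem_insert s _)

lemma concat_mem (hf : IsFusion k 𝒯 A S) {n : ℕ} {t : List (ℕ → ℤ)} (ht : ⟨k, t, 0⟩ ∈ S n)
    {z : ℕ → ℤ} (hz : z ∈ A n) : ⟨k, t ++ [z], 0⟩ ∈ S (n + 1) := by
  have h := hf.next_subset n _ ht (PartialTuple.close_add_mem_next k.zero_le hz)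
  rw [PartialTuple.close_of_minExp_eq_zero (Nat.min_zero k)] at h
  simpa [PartialTuple.add] using h

lemma isFin (hf : IsFusion k 𝒯 A S) (hT : IsUTree k U 𝒯 []) {n : ℕ} {z : ℕ → ℤ} (hz : z ∈ A n) :
    IsFin k z :=
  (hT.blocks _ (hf.mem_tree _ _ (hf.concat_mem (hf.monotone n.zero_le hf.start) hz))).1 z
    (by simp)

lemma blockLt (hf : IsFusion k 𝒯 A S) (hT : IsUTree k U 𝒯 []) {m n : ℕ} (hmn : m < n)
    {z z' : ℕ → ℤ} (hz : z ∈ A m) (hz' : z' ∈ A n) : BlockLt z z' := by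
  have h := hf.concat_mem (hf.monotone m.zero_le hf.start) hz
  have h' := hf.concat_mem (hf.monotone (Nat.succ_le_of_lt hmn) h) hz'
  simpa using (hT.blocks _ (hf.mem_tree _ _ h')).2

lemma isBlockSeq (hf : IsFusion k 𝒯 A S) (hT : IsUTree k U 𝒯 []) {x : ℕ → ℕ → ℤ}
    (hx : ∀ n, x n ∈ A n) : IsBlockSeq k x :=
  ⟨fun n => hf.isFin hT (hx n), fun m n hmn => hf.blockLt hT hmn (hx m) (hx n)⟩

lemma disjoint_support (hf : IsFusion k 𝒯 A S) (hT : IsUTree k U 𝒯 []) {m n : ℕ} (hmn : m ≠ n)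
    {z z' : ℕ → ℤ} (hz : z ∈ A m) (hz' : z' ∈ A n) : Disjoint (support z) (support z') :=
  hmn.lt_or_gt.elim (fun h => (hf.blockLt hT h hz hz').disjoint_support)
    fun h => (hf.blockLt hT h hz' hz).disjoint_support.symm

lemma exists_minExp_mem (hf : IsFusion k 𝒯 A S) (hk : 0 < k) {t : List (ℕ → ℤ)} {M N m : ℕ}
    (hMN : M ≤ N) {n j : Fin m → ℕ} {z : Fin m → ℕ → ℤ} (hn : StrictMono n)
    (hnMN : ∀ i, n i ∈ Ico M N) (hz : ∀ i, z i ∈ A (n i)) (hj : ∀ i, j i < k)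
    (ht : ⟨k, t, 0⟩ ∈ S M) :
    ∃ h, (∀ i, h ≤ j i) ∧ ⟨h, t, ∑ i, negT^[j i] (z i)⟩ ∈ S N ∧
      (h = 0 → ⟨k, t ++ [∑ i, negT^[j i] (z i)], 0⟩ ∈ S N) := by
  induction m generalizing N with
  | zero => exact ⟨k, fun i => i.elim0, by simpa using hf.monotone hMN ht, fun h => by omega⟩
  | succ m ih =>
    have hlast := hnMN (Fin.last m)
    obtain ⟨h, hle, hmem, -⟩ := ih hlast.1 (hn.comp Fin.strictMono_castSucc)
      (fun i => ⟨(hnMN _).1, hn i.castSucc_lt_last⟩) (fun i => hz i.castSucc)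
      fun i => hj i.castSucc
    have hnext := (hf.next_subset _ _ hmem).trans (hf.monotone (Nat.succ_le_of_lt hlast.2))
    have hadd := hnext (PartialTuple.add_mem_next (hj (Fin.last m)).le (hz (Fin.last m)))
    have hclose := hnext (PartialTuple.close_add_mem_next (hj (Fin.last m)).le (hz (Fin.last m)))
    rw [Fin.sum_univ_castSucc]
    refine ⟨min h (j (Fin.last m)), Fin.lastCases (min_le_right _ _) fun i =>
      (min_le_left _ _).trans (hle i), hadd, fun h0 => ?_⟩
    rwa [PartialTuple.close_of_minExp_eq_zero h0] at hclose

lemma concat_mem_of_inNegSpan (hf : IsFusion k 𝒯 A S) {t : List (ℕ → ℤ)} {M N : ℕ}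
    {q : ℕ → ℤ} (hq : InNegSpan k A M N q) (ht : ⟨k, t, 0⟩ ∈ S M) :
    ⟨k, t ++ [q], 0⟩ ∈ S N := by
  obtain ⟨m, n, j, z, hn, hnMN, hz, hj, ⟨i, hi⟩, rfl⟩ := hq
  obtain ⟨h, hle, -, hmem⟩ := hf.exists_minExp_mem ((Nat.zero_le _).trans_lt (hj i))
    ((hnMN i).1.trans (hnMN i).2.le) hn hnMN hz hj ht
  exact hmem (Nat.le_zero.1 (hi ▸ hle i))

lemma ofFn_mem (hf : IsFusion k 𝒯 A S) {d N₀ : ℕ} {M N : Fin d → ℕ} {Q : Fin d → ℕ → ℤ}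
    (hMN : ∀ a b, a < b → N a ≤ M b) (hN₀ : ∀ a, N a ≤ N₀)
    (hQ : ∀ a, InNegSpan k A (M a) (N a) (Q a)) : ⟨k, List.ofFn Q, 0⟩ ∈ S N₀ := by
  induction d generalizing N₀ with
  | zero => simpa using hf.monotone N₀.zero_le hf.start
  | succ d ih =>
    rw [List.ofFn_succ_last]
    refine hf.monotone (hN₀ (Fin.last d)) (hf.concat_mem_of_inNegSpan (hQ (Fin.last d)) ?_)
    exact ih (fun a b hab => hMN _ _ (Fin.castSucc_lt_castSucc_iff.2 hab))
      (fun a => hMN _ _ a.castSucc_lt_last) fun a => hQ a.castSucc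

end IsFusion

end Fusion

section Span

variable {k : ℕ} {U : Ultrafilter (ℕ → ℤ)} {𝒯 : Set (List (ℕ → ℤ))} {A : ℕ → Set (ℕ → ℤ)}
  {S : ℕ → Set PartialTuple} {x : ℕ → ℕ → ℤ}

lemma IsBlockSeq.disjoint_support (hx : IsBlockSeq k x) {m n : ℕ} (hmn : m ≠ n) :
    Disjoint (support (x m)) (support (x n)) :=
  hmn.lt_or_gt.elim (fun h => (hx.2 m n h).disjoint_support)
    fun h => (hx.2 n m h).disjoint_support.symm

lemma IsBlockSeq.sum_apply_ne_zero (hx : IsBlockSeq k x) {ι : Type*} [Fintype ι] {n j : ι → ℕ}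
    {ε : ι → ℤ} (hn : Injective n) (hε : ∀ i, ε i ≠ 0) (hj : ∀ i, j i < k) {i : ι} {u : ℕ}
    (hu : |x (n i) u| = k) : (∑ i, ε i • tetris^[j i] (x (n i))) u ≠ 0 := by
  have hmem : u ∈ support (tetris^[j i] (x (n i))) :=
    tetris_iterate_apply_ne_zero (hu ▸ Int.ofNat_lt.2 (hj i))
  have hother : ∀ i' ∈ Finset.univ, i' ≠ i → (ε i' • tetris^[j i'] (x (n i'))) u = 0 := by
    intro i' _ hi'
    have hsupp : u ∉ support (x (n i')) := disjoint_right.1 (hx.disjoint_support (hn.ne hi'))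
      (support_tetris_iterate_subset _ _ hmem)
    have hzero : tetris^[j i'] (x (n i')) u = 0 :=
      notMem_support.1 (notMem_subset (support_tetris_iterate_subset (j i') _) hsupp)
    simp [hzero]
  rw [Finset.sum_apply, Finset.sum_eq_single_of_mem i (Finset.mem_univ i) hother]
  exact mul_ne_zero (hε i) hmem

lemma IsBlockSeq.lt_of_blockLt (hx : IsBlockSeq k x) (hk : 0 < k) {q q' : ℕ → ℤ}
    (hq : BlockLt q q') {l m : ℕ} (hl : ∀ u, |x l u| = k → q u ≠ 0)
    (hm : ∀ u, |x m u| = k → q' u ≠ 0) : l < m := by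
  obtain ⟨u, hu⟩ := (hx.1 l).2.2
  obtain ⟨v, hv⟩ := (hx.1 m).2.2
  by_contra! hml
  rcases hml.eq_or_lt with rfl | hml
  · exact (hq u u (hl u hu) (hm u hu)).false
  · have hvu : v < u := hx.2 m l hml v u (by grind) (by grind)
    exact hvu.asymm (hq u v (hl u hu) (hm v hv))

lemma InSpanPM.pos {q : ℕ → ℤ} (hq : InSpanPM k x q) : 0 < k := by
  obtain ⟨_, _, _, j, _, _, hj, ⟨i, _⟩, _⟩ := hq
  exact (Nat.zero_le (j i)).trans_lt (hj i)

theorem IsFusion.exists_inNegSpan_normLe_sub (hf : IsFusion k 𝒯 A S) (hT : IsUTree k U 𝒯 [])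
    (hxA : ∀ n, x n ∈ A n)
    (hA : ∀ n (ε : ℤ) j, ε = 1 ∨ ε = -1 →
      ∃ z ∈ A n, normLe (ε • tetris^[j] (x n) - negT^[j] z) 1)
    {q : ℕ → ℤ} (hq : InSpanPM k x q) :
    ∃ M L, (∀ u, |x M u| = k → q u ≠ 0) ∧ (∀ u, |x L u| = k → q u ≠ 0) ∧
      ∃ q', InNegSpan k A M (L + 1) q' ∧ normLe (q - q') 1 := by
  obtain ⟨m, n, ε, j, hn, hε, hj, hj0, rfl⟩ := hq
  have hx : IsBlockSeq k x := hf.isBlockSeq hT hxA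
  have hε0 (i) : ε i ≠ 0 := by rcases hε i with h | h <;> simp [h]
  have hpeak (i) (u : ℕ) (hu : |x (n i) u| = k) : (∑ i, ε i • tetris^[j i] (x (n i))) u ≠ 0 :=
    hx.sum_apply_ne_zero hn.injective hε0 hj hu
  choose z hz hnear using fun i => hA (n i) (ε i) (j i) (hε i)
  refine ⟨n 0, n (Fin.last m), hpeak 0, hpeak (Fin.last m), _, ⟨m + 1, n, j, z, hn,
    fun i => ⟨hn.monotone i.zero_le, Nat.lt_succ_of_le (hn.monotone i.le_last)⟩, hz, hj, hj0,
    rfl⟩, ?_⟩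
  rw [← Finset.sum_sub_distrib]
  refine normLe_sum_of_pairwise_disjoint hnear fun i i' hii' => ?_
  have hsupp (i) : support (ε i • tetris^[j i] (x (n i)) - negT^[j i] (z i)) ⊆
      support (x (n i)) ∪ support (z i) :=
    (support_sub _ _).trans (union_subset_union
      ((support_const_smul_subset _ _).trans (support_tetris_iterate_subset _ _))
      (support_negT_iterate_subset _ _))
  refine Disjoint.mono (hsupp i) (hsupp i') ?_
  simp only [disjoint_union_left, disjoint_union_right]
  have hne := hn.injective.ne hii'
  exact ⟨⟨hf.disjoint_support hT hne (hxA _) (hxA _), hf.disjoint_support hT hne (hz _) (hxA _)⟩,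
    hf.disjoint_support hT hne (hxA _) (hz _), hf.disjoint_support hT hne (hz _) (hz _)⟩

theorem IsUTree.exists_isBlockSeq_forall_approx (hT : IsUTree k U 𝒯 []) (hU : IsCofiniteUF k U)
    (hUI : IsTetrisIdempotent U) :
    ∃ P, IsBlockSeq k P ∧ ∀ d (Q : Fin d → ℕ → ℤ), IsBlockSeqFin k d Q →
      (∀ a, InSpanPM k P (Q a)) →
        ∃ Q' : Fin d → ℕ → ℤ, List.ofFn Q' ∈ 𝒯 ∧ ∀ a, normLe (Q a - Q' a) 1 := by
  obtain ⟨x, y, S, hxy, hf⟩ := hT.exists_isFusion hU hUI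
  have hxA (n) : x n ∈ ({x n, y n} : Set (ℕ → ℤ)) := Or.inl rfl
  have hx : IsBlockSeq k x := hf.isBlockSeq hT hxA
  refine ⟨x, hx, fun d Q hQ hQx => ?_⟩
  choose M L hM hL Q' hQ' hnear using fun a => hf.exists_inNegSpan_normLe_sub hT hxA
    (fun n ε j hε => exists_normLe_smul_tetris_sub_negT (hxy n) hε j) (hQx a)
  have hLM (a b) (hab : a < b) : L a + 1 ≤ M b :=
    hx.lt_of_blockLt (hQx a).pos (hQ.2 a b hab) (hL a) (hM b)
  have hL_le (a) : L a + 1 ≤ Finset.univ.sup fun b => L b + 1 :=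
    Finset.le_sup (f := fun b => L b + 1) (Finset.mem_univ a)
  exact ⟨Q', hf.mem_tree _ _ (hf.ofFn_mem hLM hL_le hQ'), hnear⟩

end Span

/-- multi-dimensional version: for every `k, d, r ≥ 1` and every colouring
`c : FIN_{±k}^[d] → r` there are `i < r` and `P ∈ FIN_{±k}^[∞]` with
`⟨P⟩_{±k}^[d] ⊆ (c⁻¹{i})₁`. -/
theorem gowers_multidimensional (k d r : ℕ) (hk : 1 ≤ k) (hd : 1 ≤ d) (hr : 1 ≤ r)
    (c : (Fin d → ℕ → ℤ) → Fin r) :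
    ∃ (i : Fin r) (P : ℕ → ℕ → ℤ), IsBlockSeq k P ∧
      ∀ Q : Fin d → ℕ → ℤ, IsBlockSeqFin k d Q → (∀ n, InSpanPM k P (Q n)) →
        ∃ Q' : Fin d → ℕ → ℤ, IsBlockSeqFin k d Q' ∧ c Q' = i ∧
          ∀ n, normLe (Q n - Q' n) 1 := by
  obtain ⟨U, hU, hUI⟩ := exists_isCofiniteUF_isTetrisIdempotent k
  obtain ⟨i, 𝒯, hT, hcol⟩ := hU.exists_isUTree_colour_eq c
  obtain ⟨P, hP, happrox⟩ := hT.exists_isBlockSeq_forall_approx hU hUI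
  refine ⟨i, P, hP, fun Q hQ hQP => ?_⟩
  obtain ⟨Q', hQ', hnear⟩ := happrox d Q hQ hQP
  exact ⟨Q', isFinBlockSeq_ofFn.1 (hT.blocks _ hQ'), hcol Q' hQ', hnear⟩
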